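/- arXiv:math/0602081 — 4 statements merged into one kernel-verified Lean document; each statement's English description precedes it below -/
import Mathlib

section
/- Parameter-dependence of fixed points (smooth real case): Let E be a real normed vector space, F a real Banach space, P ⊆ E and U ⊆ F open subsets, and f : P × U → F a map that is infinitely continuously (Fréchet) differentiable on P × U, such that there is θ ∈ [0,1) with ‖f(p,x) − f(p,y)‖ ≤ θ·‖x − y‖ for all x, y ∈ U and p ∈ P. Then the set Q := {p ∈ P : f(p,·) has a fixed point in U} is open in P, for each p ∈ Q the fixed point x_p ∈ U is unique, and the map φ : Q → F, φ(p) := x_p, is infinitely continuously (Fréchet) differentiable on the open set Q. -/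
open Set Metric Filter Topology

/-!
A point `x` in the domain of a `K`-contraction `g` lies within `dist x (g x) / (1 - K)` of every
fixed point, and if the closed ball of that radius around `x` lies in the domain, then the ball is
invariant and Banach's theorem yields a fixed point in it. Taking for `x` the fixed point of a
nearby parameter gives uniqueness, openness of the set of parameters having a fixed point, and
continuity of the fixed point `φ p`.

Smoothness comes from the equation `φ p - f (p, φ p) = 0`. The partial derivative of the left-hand
side is `id - D₂f`, which is invertible by the Neumann series because the Lipschitz bound gives
`‖D₂f‖ ≤ K < 1`. As the parameter space need not be complete, the usual implicit function
theorem does not apply; but `φ` is already known to be continuous, so differentiating the equation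
directly gives a formula for `fderiv φ` in terms of `fderiv f` along the graph of `φ`, and this
formula improves the regularity of `φ` by one derivative at a time.
-/

open Function
open scoped NNReal

section MetricSpace

variable {X : Type*} {K : ℝ≥0}

theorem dist_isFixedPt_le_of_lipschitzOnWith [PseudoMetricSpace X] {g : X → X} {s : Set X} {x y : X}
    (hK : K < 1) (hg : LipschitzOnWith K g s) (hx : x ∈ s) (hy : y ∈ s) (hfix : IsFixedPt g y) :
    dist x y ≤ dist x (g x) / (1 - K) := by
  rw [le_div_iff₀ (sub_pos.2 (NNReal.coe_lt_one.2 hK))]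
  have htri : dist x y ≤ dist x (g x) + dist (g x) (g y) := by
    simpa only [hfix.eq] using dist_triangle x (g x) y
  linarith [hg.dist_le_mul x hx y hy]

theorem isFixedPt_unique_of_lipschitzOnWith [MetricSpace X] {g : X → X} {s : Set X} {x y : X}
    (hK : K < 1) (hg : LipschitzOnWith K g s) (hx : x ∈ s) (hy : y ∈ s)
    (hgx : IsFixedPt g x) (hgy : IsFixedPt g y) : x = y :=
  dist_le_zero.1 <| by
    simpa only [hgx.eq, dist_self, zero_div] using
      dist_isFixedPt_le_of_lipschitzOnWith hK hg hx hy hgy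

theorem mapsTo_closedBall_of_lipschitzOnWith [PseudoMetricSpace X] {g : X → X} {x : X} {r : ℝ}
    (hg : LipschitzOnWith K g (closedBall x r)) (hgx : dist (g x) x ≤ (1 - K) * r) :
    MapsTo g (closedBall x r) (closedBall x r) := by
  intro y hy
  have hx : x ∈ closedBall x r := mem_closedBall_self (dist_nonneg.trans hy)
  calc dist (g y) x ≤ dist (g y) (g x) + dist (g x) x := dist_triangle _ _ _
    _ ≤ K * r + (1 - K) * r := by
      gcongr
      exact (hg.dist_le_mul y hy x hx).trans (by gcongr; exact hy)
    _ = r := by ring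

theorem exists_isFixedPt_mem_closedBall [MetricSpace X] [CompleteSpace X] {g : X → X} {x : X}
    {r : ℝ} (hK : K < 1) (hg : LipschitzOnWith K g (closedBall x r))
    (hgx : dist (g x) x ≤ (1 - K) * r) : ∃ y ∈ closedBall x r, IsFixedPt g y := by
  have hr : 0 ≤ r :=
    (mul_nonneg_iff_of_pos_left (sub_pos.2 (NNReal.coe_lt_one.2 hK))).1 (dist_nonneg.trans hgx)
  have hmaps := mapsTo_closedBall_of_lipschitzOnWith hg hgx
  have hcontr : ContractingWith K (hmaps.restrict g _ _) := ⟨hK, hg.mapsToRestrict hmaps⟩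
  obtain ⟨y, hy, hfix, -⟩ := hcontr.exists_fixedPoint' isClosed_closedBall.isComplete hmaps
    (mem_closedBall_self hr) (edist_ne_top x (g x))
  exact ⟨y, hy, hfix⟩

variable {A : Type*} [TopologicalSpace A] {f : A → X → X} {U : Set X}

theorem isOpen_setOf_exists_isFixedPt [MetricSpace X] [CompleteSpace X] {P : Set A}
    (hP : IsOpen P) (hU : IsOpen U) (hK : K < 1) (hlip : ∀ p ∈ P, LipschitzOnWith K (f p) U)
    (hcont : ∀ x ∈ U, ContinuousOn (f · x) P) :
    IsOpen {p ∈ P | ∃ x ∈ U, IsFixedPt (f p) x} := by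
  rw [isOpen_iff_mem_nhds]
  rintro p₀ ⟨hp₀, x₀, hx₀, hfix⟩
  obtain ⟨r, hr, hball⟩ := nhds_basis_closedBall.mem_iff.1 (hU.mem_nhds hx₀)
  have hpos : 0 < (1 - K) * r := mul_pos (sub_pos.2 (NNReal.coe_lt_one.2 hK)) hr
  have hlim : Tendsto (f · x₀) (𝓝 p₀) (𝓝 x₀) := by
    simpa only [ContinuousAt, hfix.eq] using (hcont x₀ hx₀).continuousAt (hP.mem_nhds hp₀)
  filter_upwards [hP.mem_nhds hp₀, hlim (closedBall_mem_nhds x₀ hpos)] with p hp hdist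
  obtain ⟨y, hy, hfy⟩ := exists_isFixedPt_mem_closedBall hK ((hlip p hp).mono hball) hdist
  exact ⟨hp, y, hball hy, hfy⟩

theorem continuousOn_of_isFixedPt [PseudoMetricSpace X] {Q : Set A} {φ : A → X} (hK : K < 1)
    (hlip : ∀ p ∈ Q, LipschitzOnWith K (f p) U) (hcont : ∀ x ∈ U, ContinuousOn (f · x) Q)
    (hmaps : MapsTo φ Q U) (hfix : ∀ p ∈ Q, IsFixedPt (f p) (φ p)) : ContinuousOn φ Q := by
  intro p₀ hp₀
  have hlim : Tendsto (fun p => dist (φ p₀) (f p (φ p₀)) / (1 - K)) (𝓝[Q] p₀) (𝓝 0) := by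
    simpa only [(hfix p₀ hp₀).eq, dist_self, zero_div] using
      ((tendsto_const_nhds (x := φ p₀)).dist (hcont _ (hmaps hp₀) p₀ hp₀)).div_const (1 - K : ℝ)
  refine tendsto_iff_dist_tendsto_zero.2 <|
    squeeze_zero' (.of_forall fun _ => dist_nonneg) ?_ hlim
  filter_upwards [self_mem_nhdsWithin] with p hp
  rw [dist_comm]
  exact dist_isFixedPt_le_of_lipschitzOnWith hK (hlip p hp) (hmaps hp₀) (hmaps hp) (hfix p hp)

end MetricSpace

section ImplicitEquation

variable {𝕜 E F H : Type*} [NontriviallyNormedField 𝕜]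
  [NormedAddCommGroup E] [NormedSpace 𝕜 E] [NormedAddCommGroup F] [NormedSpace 𝕜 F]
  [NormedAddCommGroup H] [NormedSpace 𝕜 H] {G : E × F → H} {φ : E → F} {c : H}

theorem hasFDerivAt_of_implicit_equation {D : E × F →L[𝕜] H} {a : E} (hG : HasFDerivAt G D (a, φ a))
    (hinv : (D ∘L .inr 𝕜 E F).IsInvertible) (hφ : ContinuousAt φ a)
    (heq : ∀ᶠ p in 𝓝 a, G (p, φ p) = c) :
    HasFDerivAt φ (-((D ∘L .inr 𝕜 E F).inverse ∘L (D ∘L .inl 𝕜 E F))) a := by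
  set D₁ := D ∘L .inl 𝕜 E F with hD₁
  set D₂ := D ∘L .inr 𝕜 E F with hD₂
  let Δ : E → E × F := fun p => (p - a, φ p - φ a)
  let R : E → F := fun p => φ p - φ a + D₂.inverse (D₁ (p - a))
  have hDΔ : (fun p => D (Δ p)) =o[𝓝 a] Δ := by
    have hlim : Tendsto (fun p => (p, φ p)) (𝓝 a) (𝓝 (a, φ a)) := tendsto_id.prodMk_nhds hφ
    refine (hG.isLittleO.comp_tendsto hlim).neg_left.congr' ?_ .rfl
    filter_upwards [heq] with p hp
    simp only [comp_apply, hp, heq.self_of_nhds, sub_self, zero_sub, neg_neg, Δ, Prod.mk_sub_mk]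
  have hRΔ : R =o[𝓝 a] Δ := by
    refine ((D₂.inverse.isBigO_comp _ _).trans_isLittleO hDΔ).congr_left fun p => ?_
    have hsplit : D (Δ p) = D₁ (p - a) + D₂ (φ p - φ a) := by simp [Δ, hD₁, hD₂, ← map_add]
    rw [hsplit, map_add, hinv.inverse_apply_self, add_comm]
  -- Subtracting the negligible vector `(0, R p)` from `Δ p` leaves a linear function of `p - a`.
  have hΔ : Δ =O[𝓝 a] fun p => p - a := by
    have h0R : (fun p => ((0 : E), R p)) =o[𝓝 a] Δ := (Asymptotics.isLittleO_zero _ _).prod_left hRΔ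
    refine h0R.right_isBigO_sub.trans <|
      (((ContinuousLinearMap.id 𝕜 E).prod (-(D₂.inverse ∘L D₁))).isBigO_comp _ _).congr_left ?_
    intro p
    simp [Δ, R]
  refine .of_isLittleO ((hRΔ.trans_isBigO hΔ).congr_left fun p => ?_)
  simp only [R, neg_apply, ContinuousLinearMap.comp_apply, sub_neg_eq_add]

theorem contDiffOn_of_implicit_equation [CompleteSpace F] {n : ℕ∞} {Q : Set E} {W : Set (E × F)}
    (hQ : IsOpen Q) (hW : IsOpen W) (hG : ContDiffOn 𝕜 n G W) (hφ : ContinuousOn φ Q)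
    (hmaps : ∀ p ∈ Q, (p, φ p) ∈ W) (heq : ∀ p ∈ Q, G (p, φ p) = c)
    (hinv : ∀ p ∈ Q, (fderiv 𝕜 G (p, φ p) ∘L .inr 𝕜 E F).IsInvertible) :
    ContDiffOn 𝕜 n φ Q := by
  rw [contDiffOn_iff_forall_nat_le] at hG ⊢
  intro m hm
  induction m with
  | zero => exact contDiffOn_zero.2 hφ
  | succ m ih =>
    have hGm : ContDiffOn 𝕜 (m + 1) G W := mod_cast hG (m + 1) hm
    have hφm : ContDiffOn 𝕜 m φ Q := ih (le_trans (mod_cast m.le_succ) hm)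
    have hφ' : ∀ p ∈ Q, HasFDerivAt φ (-((fderiv 𝕜 G (p, φ p) ∘L .inr 𝕜 E F).inverse ∘L
        (fderiv 𝕜 G (p, φ p) ∘L .inl 𝕜 E F))) p := fun p hp =>
      hasFDerivAt_of_implicit_equation
        ((hGm.differentiableOn (by simp)).differentiableAt
          (hW.mem_nhds (hmaps p hp))).hasFDerivAt
        (hinv p hp) (hφ.continuousAt (hQ.mem_nhds hp))
        (eventually_of_mem (hQ.mem_nhds hp) heq)
    have hG' : ContDiffOn 𝕜 m (fun p => fderiv 𝕜 G (p, φ p)) Q :=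
      (hGm.fderiv_of_isOpen hW le_rfl).comp (contDiffOn_id.prodMk hφm) hmaps
    have hpartial : ContDiffOn 𝕜 m (fun p => fderiv 𝕜 G (p, φ p) ∘L .inr 𝕜 E F) Q :=
      hG'.clm_comp contDiffOn_const
    have hinverse : ContDiffOn 𝕜 m
        (fun p => (fderiv 𝕜 G (p, φ p) ∘L .inr 𝕜 E F).inverse) Q := fun p hp =>
      ContDiffAt.comp_contDiffWithinAt (g := ContinuousLinearMap.inverse) p
        (hinv p hp).contDiffAt_map_inverse (hpartial p hp)
    push_cast
    rw [contDiffOn_succ_iff_fderiv_of_isOpen hQ]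
    exact ⟨fun p hp => (hφ' p hp).differentiableAt.differentiableWithinAt, by simp,
      (hinverse.clm_comp (hG'.clm_comp contDiffOn_const)).neg.congr
        fun p hp => (hφ' p hp).fderiv⟩

end ImplicitEquation

section FixedPoint

variable {𝕜 E F : Type*} [NontriviallyNormedField 𝕜]
  [NormedAddCommGroup E] [NormedSpace 𝕜 E] [NormedAddCommGroup F] [NormedSpace 𝕜 F]
  {f : E × F → F} {U : Set F} {K : ℝ≥0}

theorem isInvertible_id_sub_of_norm_lt_one [CompleteSpace F] {T : F →L[𝕜] F} (hT : ‖T‖ < 1) :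
    (.id 𝕜 F - T).IsInvertible :=
  ⟨.ofUnit (Units.oneSub T hT), rfl⟩

theorem norm_comp_inr_le_of_lipschitzOnWith {D : E × F →L[𝕜] F} {p : E} {x : F}
    (hf : HasFDerivAt f D (p, x)) (hU : U ∈ 𝓝 x)
    (hlip : LipschitzOnWith K (fun y => f (p, y)) U) : ‖D ∘L .inr 𝕜 E F‖ ≤ K :=
  (hf.comp x (hasFDerivAt_prodMk_right p x)).le_of_lipschitzOn hU hlip

theorem contDiffOn_of_isFixedPt [CompleteSpace F] {n : ℕ∞} {Q : Set E} {φ : E → F}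
    (hQ : IsOpen Q) (hU : IsOpen U) (hf : ContDiffOn 𝕜 n f (Q ×ˢ U)) (hK : K < 1)
    (hlip : ∀ p ∈ Q, LipschitzOnWith K (fun x => f (p, x)) U) (hmaps : MapsTo φ Q U)
    (hfix : ∀ p ∈ Q, f (p, φ p) = φ p) : ContDiffOn 𝕜 n φ Q := by
  have hφ : ContinuousOn φ Q := continuousOn_of_isFixedPt hK hlip
    (fun x hx => hf.continuousOn.comp (by fun_prop) fun p hp => ⟨hp, hx⟩) hmaps hfix
  obtain rfl | hn := eq_or_ne n 0
  · exact contDiffOn_zero.2 hφ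
  refine contDiffOn_of_implicit_equation (G := fun q => q.2 - f q) (c := 0) hQ (hQ.prod hU)
    (contDiffOn_snd.sub hf) hφ (fun p hp => ⟨hp, hmaps hp⟩)
    (fun p hp => sub_eq_zero.2 (hfix p hp).symm) fun p hp => ?_
  have hfp : HasFDerivAt f (fderiv 𝕜 f (p, φ p)) (p, φ p) :=
    ((hf.differentiableOn (mod_cast hn)).differentiableAt
      ((hQ.prod hU).mem_nhds ⟨hp, hmaps hp⟩)).hasFDerivAt
  have hnorm : ‖fderiv 𝕜 f (p, φ p) ∘L .inr 𝕜 E F‖ < 1 :=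
    (norm_comp_inr_le_of_lipschitzOnWith hfp (hU.mem_nhds (hmaps hp)) (hlip p hp)).trans_lt hK
  rw [(hasFDerivAt_snd.fun_sub hfp).fderiv, ContinuousLinearMap.sub_comp,
    ContinuousLinearMap.snd_comp_inr]
  exact isInvertible_id_sub_of_norm_lt_one hnorm

theorem fixed_points_depend_smoothly_on_parameters_real_general [CompleteSpace F] {n : ℕ∞}
    {P : Set E} (hP : IsOpen P) (hU : IsOpen U) (f : E × F → F)
    (hf : ContDiffOn 𝕜 n f (P ×ˢ U)) (hK : K < 1)
    (hlip : ∀ p ∈ P, LipschitzOnWith K (fun x => f (p, x)) U) :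
    IsOpen {p ∈ P | ∃ x ∈ U, f (p, x) = x} ∧
    (∀ p ∈ P, ∀ x ∈ U, ∀ y ∈ U, f (p, x) = x → f (p, y) = y → x = y) ∧
    ∃ φ : E → F, ContDiffOn 𝕜 n φ {p ∈ P | ∃ x ∈ U, f (p, x) = x} ∧
      ∀ p ∈ {p ∈ P | ∃ x ∈ U, f (p, x) = x}, φ p ∈ U ∧ f (p, φ p) = φ p := by
  have hopen : IsOpen {p ∈ P | ∃ x ∈ U, f (p, x) = x} :=
    isOpen_setOf_exists_isFixedPt hP hU hK hlip fun x hx =>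
      hf.continuousOn.comp (by fun_prop) fun p hp => ⟨hp, hx⟩
  have hchoice : ∀ p ∈ {p ∈ P | ∃ x ∈ U, f (p, x) = x}, ∃ x, x ∈ U ∧ f (p, x) = x :=
    fun p hp => hp.2
  choose! φ hφU hφ using hchoice
  refine ⟨hopen, fun p hp x hx y hy => isFixedPt_unique_of_lipschitzOnWith hK (hlip p hp) hx hy,
    φ, ?_, fun p hp => ⟨hφU p hp, hφ p hp⟩⟩
  exact contDiffOn_of_isFixedPt hopen hU (hf.mono (prod_mono_left (sep_subset _ _))) hK
    (fun p hp => hlip p hp.1) hφU hφ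

end FixedPoint

/-- **Parameter-dependence of fixed points (smooth real case).**  Let `E` be a real
normed vector space, `F` a real Banach space, `P ⊆ E` and `U ⊆ F` open, and
`f : P × U → F` a `C^∞` map (in the Fréchet sense) such that `(f (p, ·))_{p ∈ P}` is
a uniform family of contractions with constant `θ < 1`.  Then
`Q := {p ∈ P : f (p, ·) has a fixed point in U}` is open, the fixed point `x_p` is
unique for each `p ∈ Q`, and `p ↦ x_p` is `C^∞` on `Q`. -/
theorem fixed_points_depend_smoothly_on_parameters_real
    {E F : Type*}
    [NormedAddCommGroup E] [NormedSpace ℝ E]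
    [NormedAddCommGroup F] [NormedSpace ℝ F] [CompleteSpace F]
    {P : Set E} {U : Set F} (hP : IsOpen P) (hU : IsOpen U)
    (f : E × F → F) (hf : ContDiffOn ℝ (⊤ : ℕ∞) f (P ×ˢ U))
    (θ : ℝ) (hθ₀ : 0 ≤ θ) (hθ₁ : θ < 1)
    (hcontr : ∀ p ∈ P, ∀ x ∈ U, ∀ y ∈ U, ‖f (p, x) - f (p, y)‖ ≤ θ * ‖x - y‖) :
    IsOpen {p ∈ P | ∃ x ∈ U, f (p, x) = x} ∧
    (∀ p ∈ P, ∀ x ∈ U, ∀ y ∈ U, f (p, x) = x → f (p, y) = y → x = y) ∧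
    ∃ φ : E → F, ContDiffOn ℝ (⊤ : ℕ∞) φ {p ∈ P | ∃ x ∈ U, f (p, x) = x} ∧
      ∀ p ∈ {p ∈ P | ∃ x ∈ U, f (p, x) = x}, φ p ∈ U ∧ f (p, φ p) = φ p := by
  have hlip : ∀ p ∈ P, LipschitzOnWith ⟨θ, hθ₀⟩ (fun x => f (p, x)) U := fun p hp =>
    .of_dist_le_mul fun x hx y hy => by
      rw [dist_eq_norm, dist_eq_norm]
      exact hcontr p hp x hx y hy
  exact fixed_points_depend_smoothly_on_parameters_real_general hP hU f hf hθ₁ hlip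
end

section
/- Inverse Function Theorem (C² case): Let E be a Banach space over a valued field 𝕜, U ⊆ E open, and f : U → E a C² map with witnessing continuous map f^{[1]} : U^{[1]} → E. Suppose x ∈ U is such that there is a bicontinuous 𝕜-linear automorphism A of E with A(y) = f^{[1]}(x,y,0) for all y ∈ E (i.e. f′(x) ∈ GL(E)). Then there exists an open neighbourhood V ⊆ U of x such that f(V) is open in E, f is injective on V, and the inverse map g : f(V) → E of f|_V is a C² map on the open set f(V); in particular f|_V : V → f(V) is a C²-diffeomorphism. -/
open Set Metric Filter Topology

/-- For an open set `U ⊆ E`, the extended domain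
`U^{[1]} = {(x,y,t) : x ∈ U, x + t·y ∈ U}` of the difference quotient map. -/
def UOne (𝕜 : Type*) {E : Type*} [Field 𝕜] [AddCommGroup E] [Module 𝕜 E]
    (U : Set E) : Set (E × E × 𝕜) :=
  {p | p.1 ∈ U ∧ p.1 + p.2.2 • p.2.1 ∈ U}

/-- `g : U^{[1]} → F` extends the directional difference quotients of `f`:
`g (x,y,t) = t⁻¹ • (f (x + t·y) - f x)` whenever `t ≠ 0`. -/
def IsDiffQuotOn (𝕜 : Type*) {E F : Type*} [Field 𝕜] [AddCommGroup E] [Module 𝕜 E]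
    [AddCommGroup F] [Module 𝕜 F] (U : Set E) (f : E → F) (g : E × E × 𝕜 → F) : Prop :=
  ∀ p ∈ UOne 𝕜 U, p.2.2 ≠ 0 → g p = (p.2.2)⁻¹ • (f (p.1 + p.2.2 • p.2.1) - f p.1)

/-- `f` is `C¹` on the open set `U` in the sense of extended difference quotients:
`f` is continuous on `U` and there is a continuous map `f^{[1]} : U^{[1]} → F`
extending the directional difference quotients of `f`. -/
def IsC1On (𝕜 : Type*) {E F : Type*} [Field 𝕜] [TopologicalSpace 𝕜]
    [AddCommGroup E] [Module 𝕜 E] [TopologicalSpace E]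
    [AddCommGroup F] [Module 𝕜 F] [TopologicalSpace F]
    (U : Set E) (f : E → F) : Prop :=
  ContinuousOn f U ∧
    ∃ g : E × E × 𝕜 → F, ContinuousOn g (UOne 𝕜 U) ∧ IsDiffQuotOn 𝕜 U f g

/-- `f` is `C²` on the open set `U`: it is `C¹` with a witness `f^{[1]}` which is
itself `C¹` on the open set `U^{[1]}`. -/
def IsC2On (𝕜 : Type*) {E F : Type*} [Field 𝕜] [TopologicalSpace 𝕜]
    [AddCommGroup E] [Module 𝕜 E] [TopologicalSpace E]
    [AddCommGroup F] [Module 𝕜 F] [TopologicalSpace F]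
    (U : Set E) (f : E → F) : Prop :=
  ContinuousOn f U ∧
    ∃ g : E × E × 𝕜 → F, ContinuousOn g (UOne 𝕜 U) ∧ IsDiffQuotOn 𝕜 U f g ∧
      IsC1On 𝕜 (UOne 𝕜 U) g

/-!
A `C¹` map is locally Lipschitz, so `f^{[1]}` is, and this makes `f` strictly differentiable on `U`.
The inverse function theorem for strictly differentiable maps then provides a local inverse which is
again strictly differentiable at every point, and such a map is `C¹`: at `t = 0` its difference
quotients converge to the derivative. The remaining order of smoothness is gained by bootstrapping.
The difference quotient `G` of the inverse `f⁻¹` solves `f^{[1]} (f⁻¹ z, G (z, w, t), t) = w`, and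
the cocycle identity of `G` turns this into a formula for the difference quotients of `G` in terms
of `f`, `f⁻¹`, `f^{[2]}` and `G`, whose right-hand side is continuous also where `t = 0`.
-/

section Algebra

variable {𝕜 E F : Type*} [Field 𝕜] [AddCommGroup E] [Module 𝕜 E] [AddCommGroup F] [Module 𝕜 F]
  {U V : Set E} {f : E → F} {g : E × E × 𝕜 → F} {p : E × E × 𝕜}

/-- The directional difference quotient `(x, y, t) ↦ t⁻¹ • (f (x + t • y) - f x)`, as a total
function; where `t = 0` it has the junk value `0`. -/
def diffQuot (𝕜 : Type*) {E F : Type*} [Field 𝕜] [AddCommGroup E] [Module 𝕜 E]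
    [AddCommGroup F] [Module 𝕜 F] (f : E → F) (p : E × E × 𝕜) : F :=
  p.2.2⁻¹ • (f (p.1 + p.2.2 • p.2.1) - f p.1)

theorem UOne_mono (h : U ⊆ V) : UOne 𝕜 U ⊆ UOne 𝕜 V :=
  fun _ hp => ⟨h hp.1, h hp.2⟩

theorem mem_UOne_zero {x : E} (hx : x ∈ U) (v : E) : (x, v, (0 : 𝕜)) ∈ UOne 𝕜 U :=
  ⟨hx, by simpa only [zero_smul, add_zero] using hx⟩

theorem IsDiffQuotOn.mono (hg : IsDiffQuotOn 𝕜 V f g) (h : U ⊆ V) : IsDiffQuotOn 𝕜 U f g :=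
  fun p hp => hg p (UOne_mono h hp)

theorem IsC1On.mono [TopologicalSpace 𝕜] [TopologicalSpace E] [TopologicalSpace F]
    (hf : IsC1On 𝕜 V f) (h : U ⊆ V) : IsC1On 𝕜 U f :=
  let ⟨hfc, g, hgc, hg⟩ := hf
  ⟨hfc.mono h, g, hgc.mono (UOne_mono h), hg.mono h⟩

theorem IsDiffQuotOn.smul_eq (hg : IsDiffQuotOn 𝕜 U f g) (hp : p ∈ UOne 𝕜 U) :
    p.2.2 • g p = f (p.1 + p.2.2 • p.2.1) - f p.1 := by
  rcases eq_or_ne p.2.2 0 with h0 | h0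
  · simp [h0]
  · rw [hg p hp h0, smul_inv_smul₀ h0]

theorem IsDiffQuotOn.add_smul_eq (hg : IsDiffQuotOn 𝕜 U f g) (hp : p ∈ UOne 𝕜 U) :
    f p.1 + p.2.2 • g p = f (p.1 + p.2.2 • p.2.1) := by
  rw [hg.smul_eq hp, add_sub_cancel]

theorem IsDiffQuotOn.smul_apply_add_smul (hg : IsDiffQuotOn 𝕜 U f g) {x v w : E} {s t : 𝕜}
    (hv : (x, v, t) ∈ UOne 𝕜 U) (hvw : (x, v + s • w, t) ∈ UOne 𝕜 U) :
    t • g (x, v + s • w, t) = t • (g (x, v, t) + s • g (x + t • v, w, s * t)) := by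
  have hend : x + t • v + (s * t) • w = x + t • (v + s • w) := by
    rw [smul_add, smul_smul, mul_comm s, add_assoc]
  have hw : (x + t • v, w, s * t) ∈ UOne 𝕜 U := ⟨hv.2, by simpa only [hend] using hvw.2⟩
  calc t • g (x, v + s • w, t)
      = f (x + t • (v + s • w)) - f x := hg.smul_eq hvw
    _ = (f (x + t • v) - f x) + (f (x + t • v + (s * t) • w) - f (x + t • v)) := by
      rw [hend]
      abel
    _ = t • g (x, v, t) + (s * t) • g (x + t • v, w, s * t) :=
      congrArg₂ (· + ·) (hg.smul_eq hv).symm (hg.smul_eq hw).symm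
    _ = t • (g (x, v, t) + s • g (x + t • v, w, s * t)) := by
      rw [smul_add, smul_smul, mul_comm s]

theorem IsDiffQuotOn.mapsTo_UOne {W : Set F} (hg : IsDiffQuotOn 𝕜 U f g) (hf : MapsTo f U W) :
    MapsTo (fun p : E × E × 𝕜 => (f p.1, g p, p.2.2)) (UOne 𝕜 U) (UOne 𝕜 W) :=
  fun _ hp => ⟨hf hp.1, by simpa only [hg.add_smul_eq hp] using hf hp.2⟩

end Algebra

section Topology

variable {𝕜 E F : Type*} [NontriviallyNormedField 𝕜]
  [AddCommGroup E] [Module 𝕜 E] [TopologicalSpace E] [IsTopologicalAddGroup E]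
  [ContinuousSMul 𝕜 E]
  [AddCommGroup F] [Module 𝕜 F] [TopologicalSpace F]
  {U : Set E} {f : E → F} {g : E × E × 𝕜 → F}

theorem isOpen_UOne (hU : IsOpen U) : IsOpen (UOne 𝕜 U) :=
  have hshift : Continuous fun p : E × E × 𝕜 => p.1 + p.2.2 • p.2.1 := by fun_prop
  (hU.preimage continuous_fst).inter (hU.preimage hshift)

theorem dense_setOf_snd_snd_ne_zero (𝕜 X Y : Type*) [NontriviallyNormedField 𝕜]
    [TopologicalSpace X] [TopologicalSpace Y] : Dense {p : X × Y × 𝕜 | p.2.2 ≠ 0} :=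
  (dense_compl_singleton (0 : 𝕜)).preimage (isOpenMap_snd.comp isOpenMap_snd)

theorem eqOn_of_forall_snd_snd_ne_zero {X Y Z : Type*} [TopologicalSpace X] [TopologicalSpace Y]
    [TopologicalSpace Z] [T2Space Z] {O : Set (X × Y × 𝕜)} (hO : IsOpen O)
    {φ ψ : X × Y × 𝕜 → Z} (hφ : ContinuousOn φ O) (hψ : ContinuousOn ψ O)
    (h : ∀ p ∈ O, p.2.2 ≠ 0 → φ p = ψ p) : EqOn φ ψ O :=
  EqOn.of_subset_closure (fun p hp => h p hp.1 hp.2) hφ hψ inter_subset_left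
    ((dense_setOf_snd_snd_ne_zero 𝕜 X Y).open_subset_closure_inter hO)

/-- At `t = 0` this cocycle identity says that `g (x, ·, 0)` is linear. -/
theorem IsDiffQuotOn.apply_add_smul [T2Space F] [IsTopologicalAddGroup F] [ContinuousSMul 𝕜 F]
    (hU : IsOpen U) (hg : IsDiffQuotOn 𝕜 U f g) (hgc : ContinuousOn g (UOne 𝕜 U))
    {x v w : E} {s t : 𝕜} (hv : (x, v, t) ∈ UOne 𝕜 U) (hvw : (x, v + s • w, t) ∈ UOne 𝕜 U) :
    g (x, v + s • w, t) = g (x, v, t) + s • g (x + t • v, w, s * t) := by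
  let O := UOne 𝕜 U ∩ (fun p : E × E × 𝕜 => (p.1, p.2.1 + s • w, p.2.2)) ⁻¹' UOne 𝕜 U
  have hO : IsOpen O :=
    (isOpen_UOne hU).inter ((isOpen_UOne hU).preimage (by fun_prop))
  have hmaps : MapsTo (fun p : E × E × 𝕜 => (p.1 + p.2.2 • p.2.1, w, s * p.2.2)) O (UOne 𝕜 U) := by
    refine fun p hp => ⟨hp.1.2, ?_⟩
    simpa only [smul_add, smul_smul, mul_comm s, add_assoc] using hp.2.2
  have hleft : ContinuousOn (fun p : E × E × 𝕜 => g (p.1, p.2.1 + s • w, p.2.2)) O :=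
    hgc.comp (by fun_prop) fun p hp => hp.2
  have hright : ContinuousOn
      (fun p : E × E × 𝕜 => g p + s • g (p.1 + p.2.2 • p.2.1, w, s * p.2.2)) O :=
    (hgc.mono inter_subset_left).add ((hgc.comp (by fun_prop) hmaps).const_smul s)
  exact eqOn_of_forall_snd_snd_ne_zero hO hleft hright
    (fun p hp ht => smul_right_injective F ht (hg.smul_apply_add_smul hp.1 hp.2))
    (show (x, v, t) ∈ O from ⟨hv, hvw⟩)

theorem IsDiffQuotOn.exists_continuousLinearMap_eq [T2Space F] [IsTopologicalAddGroup F]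
    [ContinuousSMul 𝕜 F] (hU : IsOpen U) (hg : IsDiffQuotOn 𝕜 U f g)
    (hgc : ContinuousOn g (UOne 𝕜 U)) {x : E} (hx : x ∈ U) :
    ∃ D : E →L[𝕜] F, ∀ v, D v = g (x, v, 0) := by
  have hadd_smul (v w : E) (s : 𝕜) : g (x, v + s • w, 0) = g (x, v, 0) + s • g (x, w, 0) := by
    simpa using hg.apply_add_smul hU hgc (mem_UOne_zero hx v) (mem_UOne_zero hx (v + s • w))
  have hadd (v w : E) : g (x, v + w, 0) = g (x, v, 0) + g (x, w, 0) := by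
    simpa using hadd_smul v w 1
  have hzero : g (x, 0, 0) = 0 := by simpa using hadd 0 0
  exact ⟨{ toFun := fun v => g (x, v, 0)
           map_add' := hadd
           map_smul' := fun s v => by simpa [hzero] using hadd_smul 0 v s
           cont := hgc.comp_continuous (by fun_prop) (mem_UOne_zero hx) }, fun _ => rfl⟩

theorem IsDiffQuotOn.leftInverse_apply [T2Space E] {W : Set F} {φ : F → E}
    {G : F × F × 𝕜 → E} (hU : IsOpen U) (hf : ContinuousOn f U) (hfW : MapsTo f U W)
    (hφ : LeftInvOn φ f U) (hg : IsDiffQuotOn 𝕜 U f g) (hgc : ContinuousOn g (UOne 𝕜 U))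
    (hG : IsDiffQuotOn 𝕜 W φ G) (hGc : ContinuousOn G (UOne 𝕜 W))
    {p : E × E × 𝕜} (hp : p ∈ UOne 𝕜 U) : G (f p.1, g p, p.2.2) = p.2.1 := by
  have hmaps := hg.mapsTo_UOne hfW
  have hcont : ContinuousOn (fun p : E × E × 𝕜 => (f p.1, g p, p.2.2)) (UOne 𝕜 U) :=
    (hf.comp continuousOn_fst fun p hp => hp.1).prodMk (hgc.prodMk (by fun_prop))
  have hsnd : ContinuousOn (fun p : E × E × 𝕜 => p.2.1) (UOne 𝕜 U) := by fun_prop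
  refine eqOn_of_forall_snd_snd_ne_zero (isOpen_UOne hU) (hGc.comp hcont hmaps) hsnd
    (fun q hq ht => smul_right_injective E ht ?_) hp
  calc q.2.2 • G (f q.1, g q, q.2.2)
      = φ (f q.1 + q.2.2 • g q) - φ (f q.1) := hG.smul_eq (hmaps hq)
    _ = q.2.2 • q.2.1 := by
      rw [hg.add_smul_eq hq, hφ hq.2, hφ hq.1, add_sub_cancel_left]

variable [IsTopologicalAddGroup F] [ContinuousSMul 𝕜 F]

theorem continuousAt_diffQuot (hU : IsOpen U) (hf : ContinuousOn f U) {p : E × E × 𝕜}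
    (hp : p ∈ UOne 𝕜 U) (ht : p.2.2 ≠ 0) : ContinuousAt (diffQuot 𝕜 f) p := by
  have hend : ContinuousAt (fun q : E × E × 𝕜 => f (q.1 + q.2.2 • q.2.1)) p :=
    ContinuousAt.comp' (hf.continuousAt (hU.mem_nhds hp.2)) (by fun_prop)
  have hbase : ContinuousAt (fun q : E × E × 𝕜 => f q.1) p :=
    ContinuousAt.comp' (hf.continuousAt (hU.mem_nhds hp.1)) (by fun_prop)
  have hinv : ContinuousAt (fun q : E × E × 𝕜 => q.2.2⁻¹) p :=
    ContinuousAt.inv₀ (by fun_prop) ht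
  exact hinv.smul (hend.sub hbase)

theorem isC1On_of_tendsto_diffQuot [T2Space F] (hU : IsOpen U) (hf : ContinuousOn f U)
    (h : ∀ x ∈ U, ∀ v : E, ∃ y,
      Tendsto (diffQuot 𝕜 f) (𝓝[{p | p.2.2 ≠ 0}] (x, v, (0 : 𝕜))) (𝓝 y)) :
    IsC1On 𝕜 U f := by
  have hdense := dense_setOf_snd_snd_ne_zero 𝕜 E E
  have htendsto {p : E × E × 𝕜} (hp : p ∈ UOne 𝕜 U) (ht : p.2.2 ≠ 0) :
      Tendsto (diffQuot 𝕜 f) (𝓝[{p | p.2.2 ≠ 0}] p) (𝓝 (diffQuot 𝕜 f p)) :=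
    (continuousAt_diffQuot hU hf hp ht).continuousWithinAt
  refine ⟨hf, extendFrom {p | p.2.2 ≠ 0} (diffQuot 𝕜 f),
    continuousOn_extendFrom (fun p _ => hdense p) ?_,
    fun p hp ht => extendFrom_eq (hdense p) (htendsto hp ht)⟩
  rintro ⟨x, v, t⟩ hp
  rcases eq_or_ne t 0 with rfl | ht
  · exact h x hp.1 v
  · exact ⟨_, htendsto hp ht⟩

end Topology

section Inverse

variable {𝕜 E F : Type*} [NontriviallyNormedField 𝕜] [AddCommGroup E] [TopologicalSpace E]
  [AddCommGroup F] [Module 𝕜 F] [TopologicalSpace F] {e : OpenPartialHomeomorph E F}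
  {g : E × E × 𝕜 → F} {G : F × F × 𝕜 → E}

/-- For the difference quotient `G` of `e.symm` and `P = (p, q, s)`: the argument of `e^{[2]}` whose
base point is the preimage `(e.symm z, G p, t)` of `p = (z, w, t)`, and which moves `z` and `t`
along `q` while keeping the middle entry `G p` fixed. -/
def symmLift (e : OpenPartialHomeomorph E F) (G : F × F × 𝕜 → E)
    (P : (F × F × 𝕜) × (F × F × 𝕜) × 𝕜) : (E × E × 𝕜) × (E × E × 𝕜) × 𝕜 :=
  ((e.symm P.1.1, G P.1, P.1.2.2), (G (P.1.1, P.2.1.1, P.2.2), 0, P.2.1.2.2), P.2.2)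

theorem continuousAt_symmLift [IsTopologicalAddGroup F] [ContinuousSMul 𝕜 F]
    (hGc : ContinuousOn G (UOne 𝕜 e.target)) {P : (F × F × 𝕜) × (F × F × 𝕜) × 𝕜}
    (hP : P ∈ UOne 𝕜 (UOne 𝕜 e.target)) : ContinuousAt (symmLift e G) P := by
  have hT : IsOpen (UOne 𝕜 e.target) := isOpen_UOne e.open_target
  have hsymm : ContinuousAt (fun P : (F × F × 𝕜) × (F × F × 𝕜) × 𝕜 => e.symm P.1.1) P :=
    ContinuousAt.comp' (e.continuousAt_symm hP.1.1) (by fun_prop)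
  have hGp : ContinuousAt (fun P : (F × F × 𝕜) × (F × F × 𝕜) × 𝕜 => G P.1) P :=
    (hGc.continuousAt (hT.mem_nhds hP.1)).comp' continuousAt_fst
  have hGq : ContinuousAt
      (fun P : (F × F × 𝕜) × (F × F × 𝕜) × 𝕜 => G (P.1.1, P.2.1.1, P.2.2)) P :=
    ContinuousAt.comp' (hGc.continuousAt (hT.mem_nhds ⟨hP.1.1, hP.2.1⟩)) (by fun_prop)
  exact (hsymm.prodMk (hGp.prodMk (by fun_prop))).prodMk
    ((hGq.prodMk (continuousAt_const.prodMk (by fun_prop))).prodMk (by fun_prop))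

variable [Module 𝕜 E]

/-- For the difference quotient `G` of `e.symm` and `P = (p, q, s)`, `p + s • q = (z', w', t')`: the
point `e.symm z' + t' • G p`, at which the increment of `G` from `p` to `p + s • q` is based. -/
def symmShift (e : OpenPartialHomeomorph E F) (G : F × F × 𝕜 → E)
    (P : (F × F × 𝕜) × (F × F × 𝕜) × 𝕜) : E :=
  e.symm (P.1 + P.2.2 • P.2.1).1 + (P.1 + P.2.2 • P.2.1).2.2 • G P.1

theorem IsDiffQuotOn.symmShift_zero_mem (hG : IsDiffQuotOn 𝕜 e.target e.symm G) {p : F × F × 𝕜}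
    (hp : p ∈ UOne 𝕜 e.target) (q : F × F × 𝕜) : symmShift e G (p, q, 0) ∈ e.source := by
  simpa only [symmShift, zero_smul, add_zero] using (hG.mapsTo_UOne e.mapsTo_symm hp).2

theorem IsDiffQuotOn.symmLift_zero_mem (hG : IsDiffQuotOn 𝕜 e.target e.symm G) {p : F × F × 𝕜}
    (hp : p ∈ UOne 𝕜 e.target) (q : F × F × 𝕜) :
    symmLift e G (p, q, 0) ∈ UOne 𝕜 (UOne 𝕜 e.source) :=
  mem_UOne_zero (hG.mapsTo_UOne e.mapsTo_symm hp) _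

variable [IsTopologicalAddGroup E] [ContinuousSMul 𝕜 E] [IsTopologicalAddGroup F]
  [ContinuousSMul 𝕜 F]

theorem continuousAt_symmShift (hGc : ContinuousOn G (UOne 𝕜 e.target))
    {P : (F × F × 𝕜) × (F × F × 𝕜) × 𝕜}
    (hP : P ∈ UOne 𝕜 (UOne 𝕜 e.target)) : ContinuousAt (symmShift e G) P := by
  have hend : ContinuousAt (fun P : (F × F × 𝕜) × (F × F × 𝕜) × 𝕜 => P.1 + P.2.2 • P.2.1) P := by
    fun_prop
  have hsymm : ContinuousAt (fun P : (F × F × 𝕜) × (F × F × 𝕜) × 𝕜 =>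
      e.symm (P.1 + P.2.2 • P.2.1).1) P :=
    ContinuousAt.comp' (e.continuousAt_symm hP.2.1) hend.fst
  have hGp : ContinuousAt (fun P : (F × F × 𝕜) × (F × F × 𝕜) × 𝕜 => G P.1) P :=
    (hGc.continuousAt ((isOpen_UOne e.open_target).mem_nhds hP.1)).comp' continuousAt_fst
  exact hsymm.add (hend.snd.snd.smul hGp)

namespace IsDiffQuotOn

theorem symm_apply_eq_add_smul [T2Space E] (hg : IsDiffQuotOn 𝕜 e.source e g)
    (hgc : ContinuousOn g (UOne 𝕜 e.source)) (hG : IsDiffQuotOn 𝕜 e.target e.symm G)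
    (hGc : ContinuousOn G (UOne 𝕜 e.target)) {z w ω : F} {v : E} {s t : 𝕜}
    (hz : (z, w, t) ∈ UOne 𝕜 e.target) (hv : (e.symm z, v, t) ∈ UOne 𝕜 e.source)
    (hw : w = g (e.symm z, v, t) + s • ω) :
    G (z, w, t) = v + s • G (e (e.symm z + t • v), ω, s * t) := by
  have hez : e (e.symm z) = z := e.right_inv hz.1
  have hback : G (z, g (e.symm z, v, t), t) = v := by
    simpa only [hez] using hg.leftInverse_apply e.open_source e.continuousOn e.mapsTo e.leftInvOn
      hgc hG hGc hv
  have hbase : (z, g (e.symm z, v, t), t) ∈ UOne 𝕜 e.target := by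
    simpa only [hez] using hg.mapsTo_UOne e.mapsTo hv
  have hend : z + t • g (e.symm z, v, t) = e (e.symm z + t • v) := by
    simpa only [hez] using hg.add_smul_eq hv
  subst hw
  rw [hG.apply_add_smul e.open_target hGc hbase hz, hback, hend]

theorem diffQuot_symm_eq [T2Space E] [T2Space F] (hg : IsDiffQuotOn 𝕜 e.source e g)
    (hgc : ContinuousOn g (UOne 𝕜 e.source)) {h : (E × E × 𝕜) × (E × E × 𝕜) × 𝕜 → F}
    (hh : IsDiffQuotOn 𝕜 (UOne 𝕜 e.source) g h) (hG : IsDiffQuotOn 𝕜 e.target e.symm G)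
    (hGc : ContinuousOn G (UOne 𝕜 e.target)) {P : (F × F × 𝕜) × (F × F × 𝕜) × 𝕜}
    (hP : P ∈ UOne 𝕜 (UOne 𝕜 e.target)) (hs : P.2.2 ≠ 0)
    (hv : symmShift e G P ∈ e.source) :
    diffQuot 𝕜 G P = G (e (symmShift e G P), P.2.1.2.1 - h (symmLift e G P),
      P.2.2 * (P.1 + P.2.2 • P.2.1).2.2) := by
  obtain ⟨p, q, s⟩ := P
  obtain ⟨hp : p ∈ UOne 𝕜 e.target, hp' : p + s • q ∈ UOne 𝕜 e.target⟩ := hP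
  have hstep : e.symm p.1 + s • G (p.1, q.1, s) = e.symm (p + s • q).1 :=
    hG.add_smul_eq (p := (p.1, q.1, s)) ⟨hp.1, hp'.1⟩
  have hline : (e.symm p.1, G p, p.2.2) + s • (G (p.1, q.1, s), (0 : E), q.2.2) =
      (e.symm (p + s • q).1, G p, (p + s • q).2.2) := by
    simp [hstep]
  have hsource : (e.symm (p + s • q).1, G p, (p + s • q).2.2) ∈ UOne 𝕜 e.source :=
    ⟨e.map_target hp'.1, hv⟩
  have hback : g (e.symm p.1, G p, p.2.2) = p.2.1 :=
    hG.leftInverse_apply e.open_target e.continuousOn_symm e.mapsTo_symm e.rightInvOn hGc hg hgc hp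
  have hgh : p.2.1 + s • h (symmLift e G (p, q, s)) =
      g (e.symm (p + s • q).1, G p, (p + s • q).2.2) := by
    have := hh.add_smul_eq (p := symmLift e G (p, q, s))
      ⟨hG.mapsTo_UOne e.mapsTo_symm hp, by simpa only [symmLift, hline] using hsource⟩
    simpa only [symmLift, hline, hback] using this
  have hw : (p + s • q).2.1 = g (e.symm (p + s • q).1, G p, (p + s • q).2.2) +
      s • (q.2.1 - h (symmLift e G (p, q, s))) := by
    rw [← hgh, smul_sub, add_add_sub_cancel]
    rfl
  have hG' : G (p + s • q) = G p + s • G (e (symmShift e G (p, q, s)),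
      q.2.1 - h (symmLift e G (p, q, s)), s * (p + s • q).2.2) :=
    hg.symm_apply_eq_add_smul hgc hG hGc hp' hsource hw
  rw [diffQuot, hG', add_sub_cancel_left, inv_smul_smul₀ hs]

end IsDiffQuotOn

theorem IsC2On.symm [T2Space E] [T2Space F] (he : IsC2On 𝕜 e.source e)
    (hsymm : IsC1On 𝕜 e.target e.symm) : IsC2On 𝕜 e.target e.symm := by
  obtain ⟨-, g, hgc, hg, -, h, hhc, hh⟩ := he
  obtain ⟨hsc, G, hGc, hG⟩ := hsymm
  have hS : IsOpen (UOne 𝕜 (UOne 𝕜 e.source)) := isOpen_UOne (isOpen_UOne e.open_source)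
  have hT : IsOpen (UOne 𝕜 e.target) := isOpen_UOne e.open_target
  refine ⟨hsc, G, hGc, hG, isC1On_of_tendsto_diffQuot hT hGc fun p hp q => ?_⟩
  have hpq : (p, q, (0 : 𝕜)) ∈ UOne 𝕜 (UOne 𝕜 e.target) := mem_UOne_zero hp q
  have hshift := hG.symmShift_zero_mem hp q
  have hshiftc := continuousAt_symmShift hGc hpq
  have hhlift : ContinuousAt (fun P => h (symmLift e G P)) (p, q, 0) :=
    (hhc.continuousAt (hS.mem_nhds (hG.symmLift_zero_mem hp q))).comp'
      (continuousAt_symmLift hGc hpq)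
  let R := fun P => (e (symmShift e G P), P.2.1.2.1 - h (symmLift e G P),
    P.2.2 * (P.1 + P.2.2 • P.2.1).2.2)
  have hRc : ContinuousAt R (p, q, 0) :=
    ((e.continuousAt hshift).comp' hshiftc).prodMk
      ((ContinuousAt.sub (by fun_prop) hhlift).prodMk (by fun_prop))
  have hR : R (p, q, 0) ∈ UOne 𝕜 e.target := by
    simpa only [R, zero_mul] using mem_UOne_zero (e.map_source hshift) _
  have hlim : Tendsto (fun P => G (R P)) (𝓝 (p, q, 0)) (𝓝 (G (R (p, q, 0)))) :=
    (hGc.continuousAt (hT.mem_nhds hR)).comp' hRc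
  refine ⟨_, (hlim.mono_left nhdsWithin_le_nhds).congr' ?_⟩
  filter_upwards [self_mem_nhdsWithin, nhdsWithin_le_nhds ((isOpen_UOne hT).mem_nhds hpq),
    nhdsWithin_le_nhds (hshiftc.preimage_mem_nhds (e.open_source.mem_nhds hshift))]
    with P hs hP hPe
  exact (hg.diffQuot_symm_eq hgc hh hG hGc hP hs hPe).symm

end Inverse

section StrictDerivative

open Asymptotics

variable {𝕜 E F : Type*} [NontriviallyNormedField 𝕜] [NormedAddCommGroup E]

theorem tendsto_snd_prodMk_apply_sub {τ : E → 𝕜} (hτ : τ =O[⊤] (id : E → E)) (x : E) :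
    Tendsto (fun p : E × E => (p.2, τ (p.1 - p.2))) (𝓝 (x, x)) (𝓝 (x, 0)) := by
  have hτ0 : Tendsto τ (𝓝 0) (𝓝 0) := (hτ.mono le_top).trans_tendsto tendsto_id
  have hsub : Tendsto (fun p : E × E => p.1 - p.2) (𝓝 (x, x)) (𝓝 0) :=
    Continuous.tendsto' (by fun_prop) _ _ (sub_self x)
  exact (continuous_snd.tendsto (x, x)).prodMk_nhds (hτ0.comp hsub)

variable [NormedSpace 𝕜 E] [NormedAddCommGroup F] [NormedSpace 𝕜 F]
  {U : Set E} {f : E → F} {g : E × E × 𝕜 → F} {x : E}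

/-- Since `‖u‖` need not be the norm of a scalar, `u` can in general only be written as `τ • ν`
with `ν` in a fixed ball and `τ = O(u)`. -/
theorem exists_smul_eq_and_isBigO_and_eventually_mem {s : Set (E × E × 𝕜)}
    (hs : s ∈ 𝓝 (x, (0 : E), (0 : 𝕜))) :
    ∃ (τ : E → 𝕜) (ν : E → E), (∀ u, τ u • ν u = u) ∧ τ =O[⊤] (id : E → E) ∧
      ∀ᶠ q : E × 𝕜 in 𝓝 (x, 0), ∀ u, (q.1, ν u, q.2) ∈ s := by
  obtain ⟨r, hr, hrs⟩ := Metric.mem_nhds_iff.1 hs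
  obtain ⟨c, hc⟩ := NormedField.exists_one_lt_norm 𝕜
  have hrescale (u : E) : ∃ (τ : 𝕜) (ν : E), τ • ν = u ∧ ‖ν‖ < r ∧ ‖τ‖ ≤ r⁻¹ * ‖c‖ * ‖u‖ := by
    rcases eq_or_ne u 0 with rfl | hu
    · exact ⟨0, 0, by simp [hr]⟩
    · obtain ⟨d, hd, hdr, -, hdu⟩ := rescale_to_shell hc hr hu
      exact ⟨d⁻¹, d • u, inv_smul_smul₀ hd u, hdr, by rwa [norm_inv]⟩
  choose τ ν hτν hν hτ using hrescale
  refine ⟨τ, ν, hτν, .of_bound (r⁻¹ * ‖c‖) (.of_forall hτ), ?_⟩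
  filter_upwards [Metric.ball_mem_nhds (x, (0 : 𝕜)) hr] with q hq u
  have hq' : dist q.1 x < r ∧ dist q.2 0 < r := max_lt_iff.1 hq
  exact hrs (max_lt hq'.1 (max_lt (by simpa using hν u) hq'.2))

theorem IsC1On.isBigO_sub (hU : IsOpen U) (hf : IsC1On 𝕜 U f) (hx : x ∈ U) :
    (fun p : E × E => f p.1 - f p.2) =O[𝓝 (x, x)] fun p => p.1 - p.2 := by
  obtain ⟨-, g, hgc, hg⟩ := hf
  have hdom : UOne 𝕜 U ∈ 𝓝 (x, (0 : E), (0 : 𝕜)) :=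
    (isOpen_UOne hU).mem_nhds (mem_UOne_zero hx 0)
  obtain ⟨M, hM⟩ := ((hgc.continuousAt hdom).isBigO_one ℝ).bound
  obtain ⟨τ, ν, hτν, hτ, hs⟩ := exists_smul_eq_and_isBigO_and_eventually_mem (inter_mem hdom hM)
  have hmem := (tendsto_snd_prodMk_apply_sub hτ x).eventually hs
  have hsmul : (fun p : E × E => f p.1 - f p.2) =ᶠ[𝓝 (x, x)]
      fun p => τ (p.1 - p.2) • g (p.2, ν (p.1 - p.2), τ (p.1 - p.2)) := by
    filter_upwards [hmem] with p hp
    simpa [hτν] using (hg.smul_eq (hp (p.1 - p.2)).1).symm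
  have hbound : (fun p : E × E => g (p.2, ν (p.1 - p.2), τ (p.1 - p.2))) =O[𝓝 (x, x)]
      fun _ => (1 : ℝ) :=
    .of_bound M (hmem.mono fun p hp => (hp (p.1 - p.2)).2)
  have hτsub : (fun p : E × E => τ (p.1 - p.2)) =O[𝓝 (x, x)] fun p => ‖p.1 - p.2‖ :=
    (hτ.comp_tendsto tendsto_top).norm_right
  exact hsmul.trans_isBigO (.of_norm_right (by simpa using hτsub.smul hbound))

/-- The decomposition `f b - f a - D (b - a) = τ • (g (a, ν, τ) - g (x, ν, 0))` with `b - a = τ • ν`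
turns the Lipschitz estimate for `g` into strict differentiability of `f`. -/
theorem IsDiffQuotOn.hasStrictFDerivAt (hU : IsOpen U) (hg : IsDiffQuotOn 𝕜 U f g)
    (hgC1 : IsC1On 𝕜 (UOne 𝕜 U) g) (hx : x ∈ U) {D : E →L[𝕜] F}
    (hD : ∀ v, D v = g (x, v, 0)) : HasStrictFDerivAt f D x := by
  have hdom : UOne 𝕜 U ∈ 𝓝 (x, (0 : E), (0 : 𝕜)) :=
    (isOpen_UOne hU).mem_nhds (mem_UOne_zero hx 0)
  obtain ⟨K, hK⟩ := (hgC1.isBigO_sub (isOpen_UOne hU) (mem_UOne_zero hx 0)).bound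
  rw [nhds_prod_eq, Filter.Eventually, mem_prod_same_iff] at hK
  obtain ⟨s, hs, hsK⟩ := hK
  obtain ⟨τ, ν, hτν, hτ, hmem⟩ :=
    exists_smul_eq_and_isBigO_and_eventually_mem (inter_mem hdom hs)
  have hlim := tendsto_snd_prodMk_apply_sub hτ x
  have hmemp := hlim.eventually hmem
  have hsmul : (fun p : E × E => f p.1 - f p.2 - D (p.1 - p.2)) =ᶠ[𝓝 (x, x)] fun p =>
      τ (p.1 - p.2) • (g (p.2, ν (p.1 - p.2), τ (p.1 - p.2)) - g (x, ν (p.1 - p.2), 0)) := by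
    filter_upwards [hmemp] with p hp
    have hf : τ (p.1 - p.2) • g (p.2, ν (p.1 - p.2), τ (p.1 - p.2)) = f p.1 - f p.2 := by
      simpa [hτν] using hg.smul_eq (hp (p.1 - p.2)).1
    rw [smul_sub, hf, ← hD, ← map_smul, hτν]
  have hlip : ∀ᶠ p : E × E in 𝓝 (x, x),
      ‖g (p.2, ν (p.1 - p.2), τ (p.1 - p.2)) - g (x, ν (p.1 - p.2), 0)‖ ≤
        K * ‖(p.2, τ (p.1 - p.2)) - (x, 0)‖ := by
    filter_upwards [hmemp] with p hp
    simpa [Prod.norm_def] using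
      hsK (mk_mem_prod (hp (p.1 - p.2)).2 (hmem.self_of_nhds (p.1 - p.2)).2)
  have hsmall : (fun p : E × E => g (p.2, ν (p.1 - p.2), τ (p.1 - p.2)) - g (x, ν (p.1 - p.2), 0))
      =o[𝓝 (x, x)] fun _ => (1 : ℝ) :=
    (IsBigO.of_bound K hlip).trans_isLittleO
      ((isLittleO_one_iff ℝ).2 (by simpa using hlim.sub_const (x, 0)))
  have hτsub : (fun p : E × E => τ (p.1 - p.2)) =O[𝓝 (x, x)] fun p => ‖p.1 - p.2‖ :=
    (hτ.comp_tendsto tendsto_top).norm_right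
  exact .of_isLittleO <| hsmul.trans_isLittleO <|
    .of_norm_right (by simpa using hτsub.smul_isLittleO hsmall)

theorem continuousAt_of_hasStrictFDerivAt {D : E → E →L[𝕜] F} (hx : HasStrictFDerivAt f (D x) x)
    (hD : ∀ᶠ y in 𝓝 x, HasFDerivAt f (D y) y) : ContinuousAt D x := by
  refine Metric.tendsto_nhds.2 fun ε hε => ?_
  lift ε to NNReal using hε.le
  obtain ⟨s, hs, hlin⟩ :=
    hx.approximates_deriv_on_nhds (c := ε / 2) (.inr (half_pos (by exact_mod_cast hε)))
  filter_upwards [hD, eventually_mem_nhds_iff.2 hs] with y hy hys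
  have hle : ‖D y - D x‖ ≤ ε / 2 :=
    (hy.sub (D x).hasFDerivAt).le_of_lipschitzOn hys hlin.lipschitzOnWith
  rw [dist_eq_norm]
  exact hle.trans_lt (half_lt_self hε)

theorem tendsto_diffQuot_of_hasStrictFDerivAt {D : E →L[𝕜] F} (hf : HasStrictFDerivAt f D x)
    (v : E) : Tendsto (diffQuot 𝕜 f) (𝓝[{p | p.2.2 ≠ 0}] (x, v, (0 : 𝕜))) (𝓝 (D v)) := by
  have hpair : Tendsto (fun p : E × E × 𝕜 => (p.1 + p.2.2 • p.2.1, p.1)) (𝓝 (x, v, 0))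
      (𝓝 (x, x)) :=
    Continuous.tendsto' (by fun_prop) _ _ (by simp)
  have hbounded : (fun p : E × E × 𝕜 => p.2.1) =O[𝓝 (x, v, 0)] fun _ => (1 : ℝ) :=
    (Continuous.tendsto (by fun_prop) _).isBigO_one ℝ
  have hsmul : (fun p : E × E × 𝕜 => p.2.2 • p.2.1) =O[𝓝 (x, v, 0)] fun p => p.2.2 := by
    simpa using (isBigO_refl (fun p : E × E × 𝕜 => p.2.2) _).norm_right.smul hbounded
  have hrem : (fun p : E × E × 𝕜 => f (p.1 + p.2.2 • p.2.1) - f p.1 - D (p.2.2 • p.2.1))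
      =o[𝓝 (x, v, 0)] fun p => p.2.2 := by
    have := hf.isLittleO.comp_tendsto hpair
    simp only [Function.comp_def, add_sub_cancel_left] at this
    exact this.trans_isBigO hsmul
  have hlim : Tendsto (fun p : E × E × 𝕜 => p.2.2⁻¹ •
      (f (p.1 + p.2.2 • p.2.1) - f p.1 - D (p.2.2 • p.2.1)) + D p.2.1) (𝓝 (x, v, 0)) (𝓝 (D v)) := by
    simpa using hrem.tendsto_inv_smul_nhds_zero.add (Continuous.tendsto (by fun_prop) (x, v, 0))
  refine (hlim.mono_left nhdsWithin_le_nhds).congr' ?_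
  filter_upwards [self_mem_nhdsWithin] with p hp
  rw [map_smul, smul_sub _ _ (p.2.2 • D p.2.1), inv_smul_smul₀ hp, sub_add_cancel, diffQuot]

theorem isC1On_of_hasStrictFDerivAt (hU : IsOpen U)
    (hf : ∀ y ∈ U, ∃ D : E →L[𝕜] F, HasStrictFDerivAt f D y) : IsC1On 𝕜 U f := by
  have hfc : ContinuousOn f U := fun y hy =>
    let ⟨_, hD⟩ := hf y hy
    hD.continuousAt.continuousWithinAt
  exact isC1On_of_tendsto_diffQuot hU hfc fun y hy v =>
    let ⟨D, hD⟩ := hf y hy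
    ⟨D v, tendsto_diffQuot_of_hasStrictFDerivAt hD v⟩

end StrictDerivative

section InverseFunctionTheorem

variable {𝕜 E F : Type*} [NontriviallyNormedField 𝕜] [NormedAddCommGroup E] [NormedSpace 𝕜 E]
  [NormedAddCommGroup F] [NormedSpace 𝕜 F]
  {U : Set E} {f : E → F} {g : E × E × 𝕜 → F} {x : E}

theorem isC1On_symm_of_hasStrictFDerivAt (e : OpenPartialHomeomorph E F)
    (he : ∀ y ∈ e.source, ∃ B : E ≃L[𝕜] F, HasStrictFDerivAt e (B : E →L[𝕜] F) y) :
    IsC1On 𝕜 e.target e.symm :=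
  isC1On_of_hasStrictFDerivAt e.open_target fun z hz =>
    let ⟨B, hB⟩ := he (e.symm z) (e.map_target hz)
    ⟨B.symm, e.hasStrictFDerivAt_symm hz hB⟩

theorem exists_openPartialHomeomorph_of_hasStrictFDerivAt [CompleteSpace E] (hU : IsOpen U)
    (hx : x ∈ U) {D : E → E →L[𝕜] F} (hD : ∀ y ∈ U, HasStrictFDerivAt f (D y) y)
    {A : E ≃L[𝕜] F} (hA : A = D x) :
    ∃ e : OpenPartialHomeomorph E F, ⇑e = f ∧ x ∈ e.source ∧ e.source ⊆ U ∧
      ∀ y ∈ e.source, ∃ B : E ≃L[𝕜] F, HasStrictFDerivAt f (B : E →L[𝕜] F) y := by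
  have hUx : U ∈ 𝓝 x := hU.mem_nhds hx
  have hDc : ContinuousAt D x := continuousAt_of_hasStrictFDerivAt (hD x hx) <|
    mem_of_superset hUx fun y hy => (hD y hy).hasFDerivAt
  have hinv : ∀ᶠ y in 𝓝 x, D y ∈ range ((↑) : (E ≃L[𝕜] F) → E →L[𝕜] F) :=
    hDc (hA ▸ A.nhds)
  obtain ⟨O, hOsub, hO, hxO⟩ := _root_.mem_nhds_iff.1 (inter_mem hUx hinv)
  have hfA : HasStrictFDerivAt f (A : E →L[𝕜] F) x := hA ▸ hD x hx
  refine ⟨(hfA.toOpenPartialHomeomorph f).restrOpen O hO, rfl,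
    ⟨hfA.mem_toOpenPartialHomeomorph_source, hxO⟩, fun y hy => (hOsub hy.2).1, fun y hy => ?_⟩
  obtain ⟨hyU, B, hB⟩ := hOsub hy.2
  exact ⟨B, hB ▸ hD y hyU⟩

theorem inverse_function_theorem_C2_general [CompleteSpace E] (hU : IsOpen U)
    (hgq : IsDiffQuotOn 𝕜 U f g) (hgC1 : IsC1On 𝕜 (UOne 𝕜 U) g) (hx : x ∈ U)
    (A : E ≃L[𝕜] F) (hA : ∀ v : E, A v = g (x, v, (0 : 𝕜))) :
    ∃ V : Set E, IsOpen V ∧ V ⊆ U ∧ x ∈ V ∧ IsOpen (f '' V) ∧ InjOn f V ∧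
      ∃ ginv : F → E, (∀ y ∈ V, ginv (f y) = y) ∧
        (∀ z ∈ f '' V, ginv z ∈ V ∧ f (ginv z) = z) ∧
        IsC2On 𝕜 (f '' V) ginv := by
  choose! D hD using fun y (hy : y ∈ U) => hgq.exists_continuousLinearMap_eq hU hgC1.1 hy
  have hstrict : ∀ y ∈ U, HasStrictFDerivAt f (D y) y := fun y hy =>
    hgq.hasStrictFDerivAt hU hgC1 hy (hD y hy)
  have hAD : A = D x := ContinuousLinearMap.ext fun v => (hA v).trans (hD x hx v).symm
  obtain ⟨e, rfl, hxe, heU, he⟩ :=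
    exists_openPartialHomeomorph_of_hasStrictFDerivAt hU hx hstrict hAD
  have heC2 : IsC2On 𝕜 e.source e :=
    ⟨e.continuousOn, g, hgC1.1.mono (UOne_mono heU), hgq.mono heU, hgC1.mono (UOne_mono heU)⟩
  refine ⟨e.source, e.open_source, heU, hxe, ?_⟩
  rw [e.image_source_eq_target]
  exact ⟨e.open_target, e.injOn, e.symm, fun _ => e.left_inv,
    fun z hz => ⟨e.map_target hz, e.right_inv hz⟩,
    heC2.symm (isC1On_symm_of_hasStrictFDerivAt e he)⟩

end InverseFunctionTheorem

/-- **Inverse Function Theorem (C² case).**  Let `E` be a Banach space over a valued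
field `𝕜`, `U ⊆ E` open, and `f : U → E` a `C²` map with witnessing continuous map
`g = f^{[1]}` (itself `C¹` on `U^{[1]}`).  If `x ∈ U` and the differential
`y ↦ g (x, y, 0)` is a bicontinuous linear automorphism `A` of `E`, then there is an
open neighbourhood `V ⊆ U` of `x` such that `f (V)` is open, `f` is injective on `V`,
and the inverse map `f (V) → V` is `C²`; thus `f|_V : V → f (V)` is a
`C²`-diffeomorphism. -/
theorem inverse_function_theorem_C2
    {𝕜 : Type*} [NontriviallyNormedField 𝕜]
    {E : Type*} [NormedAddCommGroup E] [NormedSpace 𝕜 E] [CompleteSpace E]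
    {U : Set E} (hU : IsOpen U)
    (f : E → E) (hfc : ContinuousOn f U)
    (g : E × E × 𝕜 → E)
    (hgc : ContinuousOn g (UOne 𝕜 U)) (hgq : IsDiffQuotOn 𝕜 U f g)
    (hgC1 : IsC1On 𝕜 (UOne 𝕜 U) g)
    {x : E} (hx : x ∈ U)
    (A : E ≃L[𝕜] E) (hA : ∀ y : E, A y = g (x, y, (0 : 𝕜))) :
    ∃ V : Set E, IsOpen V ∧ V ⊆ U ∧ x ∈ V ∧ IsOpen (f '' V) ∧ InjOn f V ∧
      ∃ ginv : E → E, (∀ y ∈ V, ginv (f y) = y) ∧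
        (∀ z ∈ f '' V, ginv z ∈ V ∧ f (ginv z) = z) ∧
        IsC2On 𝕜 (f '' V) ginv :=
  inverse_function_theorem_C2_general hU hgq hgC1 hx A hA
end

section
/- Ultrametric Inverse Function Theorem (exact images of balls): Let (𝕜,|·|) be an ultrametric valued field and (F,‖·‖) an ultrametric Banach space over 𝕜 (i.e. ‖·‖ satisfies the ultrametric inequality ‖v+w‖ ≤ max{‖v‖,‖w‖}). Let x₀ ∈ F, r > 0, A : F → F a bicontinuous 𝕜-linear automorphism, and f : B_r(x₀) → F a map on the open ball B_r(x₀) := {y ∈ F : ‖y − x₀‖ < r} such that ‖f(y) − f(z) − A(y − z)‖ ≤ c·‖y − z‖ for all y, z ∈ B_r(x₀), where c < ‖A⁻¹‖⁻¹ (operator norm). Then for every y ∈ B_r(x₀) and every s with 0 < s ≤ r one has the exact image formula f(B_s(y)) = f(y) + A(B_s(0)), where B_s(y) ⊆ B_r(x₀) by the ultrametric inequality and A(B_s(0)) := {A(w) : ‖w‖ < s}. -/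
open Set Metric Filter Topology

/-!
The map `A⁻¹ ∘ f` is `x ↦ x + h x`, where `h = A⁻¹ ∘ (f - A)` is Lipschitz with constant
`‖A⁻¹‖ c < 1`, so everything reduces to contractive perturbations of the identity of an ultrametric
group. By the ultrametric inequality such a perturbation is nonexpansive, so it maps the ball around
`y` into the ball of the same radius around `y + h y`. It attains each `z` in the latter because
`x ↦ z - h x` is a contraction of the former ball, which is closed, hence complete.
-/

open scoped NNReal

theorem mul_toNNReal_lt_one {a : ℝ≥0} {c : ℝ} (hc : c < (a : ℝ)⁻¹) : a * c.toNNReal < 1 := by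
  rcases eq_zero_or_pos a with rfl | ha
  · simp
  · have hlt : c.toNNReal < a⁻¹ := by
      rwa [← NNReal.coe_inv, ← Real.toNNReal_lt_toNNReal_iff (by positivity),
        Real.toNNReal_coe] at hc
    calc a * c.toNNReal < a * a⁻¹ := by gcongr
      _ = 1 := mul_inv_cancel₀ ha.ne'

theorem mapsTo_ball_of_lipschitzOnWith_one {X Y : Type*} [PseudoMetricSpace X]
    [PseudoMetricSpace Y] {g : X → Y} {y : X} {s : ℝ} (hg : LipschitzOnWith 1 g (ball y s)) :
    MapsTo g (ball y s) (ball (g y) s) := by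
  intro x hx
  have hy : y ∈ ball y s := mem_ball_self (pos_of_mem_ball hx)
  calc dist (g x) (g y) ≤ dist x y := by simpa using hg.dist_le_mul x hx y hy
    _ < s := hx

section NonexpansivePerturbation

variable {E : Type*} [SeminormedAddCommGroup E] [IsUltrametricDist E] {h : E → E}

theorem lipschitzOnWith_one_id_add {S : Set E} (hh : LipschitzOnWith 1 h S) :
    LipschitzOnWith 1 (fun x => x + h x) S := by
  refine lipschitzOnWith_iff_norm_sub_le.mpr fun u hu v hv => ?_
  have hle : ‖h u - h v‖ ≤ ‖u - v‖ := by simpa using hh.norm_sub_le hu hv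
  calc ‖u + h u - (v + h v)‖ = ‖(u - v) + (h u - h v)‖ := by rw [add_sub_add_comm]
    _ ≤ max ‖u - v‖ ‖h u - h v‖ := IsUltrametricDist.norm_add_le_max _ _
    _ = (1 : ℝ≥0) * ‖u - v‖ := by rw [max_eq_left hle, NNReal.coe_one, one_mul]

theorem mapsTo_const_sub_ball {y z : E} {s : ℝ} (hh : LipschitzOnWith 1 h (ball y s))
    (hz : z ∈ ball (y + h y) s) : MapsTo (fun x => z - h x) (ball y s) (ball y s) := by
  have hcenter : z - h y ∈ ball y s := by
    rwa [mem_ball_iff_norm, sub_sub, add_comm, ← mem_ball_iff_norm]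
  intro x hx
  rw [IsUltrametricDist.ball_eq_of_mem hcenter, mem_ball, dist_sub_left]
  exact mapsTo_ball_of_lipschitzOnWith_one hh hx

end NonexpansivePerturbation

section ContractivePerturbation

variable {E : Type*} [NormedAddCommGroup E] [IsUltrametricDist E] [CompleteSpace E]
  {h : E → E} {K : ℝ≥0} {y : E} {s : ℝ}

theorem surjOn_ball_id_add (hK : K < 1) (hh : LipschitzOnWith K h (ball y s)) :
    SurjOn (fun x => x + h x) (ball y s) (ball (y + h y) s) := by
  intro z hz
  have hmaps := mapsTo_const_sub_ball (hh.weaken hK.le) hz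
  have hlip : LipschitzOnWith K (fun x => z - h x) (ball y s) := by
    refine .of_dist_le_mul fun u hu v hv => ?_
    simpa only [dist_sub_left] using hh.dist_le_mul u hu v hv
  have hcontr : ContractingWith K (hmaps.restrict _ _ _) := ⟨hK, hlip.mapsToRestrict hmaps⟩
  have hy : y ∈ ball y s := mem_ball_self (pos_of_mem_ball hz)
  obtain ⟨x, hx, hfix, -⟩ := hcontr.exists_fixedPoint'
    (IsUltrametricDist.isClosed_ball y s).isComplete hmaps hy (edist_ne_top _ _)
  exact ⟨x, hx, (sub_eq_iff_eq_add.mp hfix).symm⟩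

theorem image_ball_id_add (hK : K < 1) (hh : LipschitzOnWith K h (ball y s)) :
    (fun x => x + h x) '' ball y s = ball (y + h y) s :=
  (surjOn_ball_id_add hK hh).image_eq_of_mapsTo <|
    mapsTo_ball_of_lipschitzOnWith_one (lipschitzOnWith_one_id_add (hh.weaken hK.le))

end ContractivePerturbation

section ApproximatelyLinear

variable {𝕜 : Type*} [NontriviallyNormedField 𝕜]
  {E : Type*} [NormedAddCommGroup E] [NormedSpace 𝕜 E]
  {F : Type*} [NormedAddCommGroup F] [NormedSpace 𝕜 F]

theorem lipschitzOnWith_symm_comp_sub {f : E → F} {A : E ≃L[𝕜] F} {S : Set E} {c : ℝ≥0}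
    (hf : ApproximatesLinearOn f (A : E →L[𝕜] F) S c) :
    LipschitzOnWith (‖(A.symm : F →L[𝕜] E)‖₊ * c) (A.symm ∘ (f - ⇑A)) S :=
  (A.symm : F →L[𝕜] E).lipschitz.comp_lipschitzOnWith hf.lipschitzOnWith

variable [CompleteSpace E] [IsUltrametricDist E]

theorem image_ball_of_approximatesLinearOn {f : E → F} {A : E ≃L[𝕜] F} {c : ℝ≥0} {y : E} {s : ℝ}
    (hc : ‖(A.symm : F →L[𝕜] E)‖₊ * c < 1)
    (hf : ApproximatesLinearOn f (A : E →L[𝕜] F) (ball y s) c) :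
    f '' ball y s = (fun w => f y + A w) '' ball (0 : E) s := by
  have hsymm : ∀ x, x + (A.symm ∘ (f - ⇑A)) x = A.symm (f x) := fun x => by simp
  have himage : (fun x => A.symm (f x)) '' ball y s = ball (A.symm (f y)) s := by
    simpa only [hsymm] using image_ball_id_add hc (lipschitzOnWith_symm_comp_sub hf)
  calc f '' ball y s
    _ = A '' ((fun x => A.symm (f x)) '' ball y s) := by
      simp only [image_image, A.apply_symm_apply]
    _ = A '' ((fun w => A.symm (f y) + w) '' ball 0 s) := by
      rw [himage, ← singleton_add_ball_zero, singleton_add]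
    _ = (fun w => f y + A w) '' ball 0 s := by
      simp only [image_image, map_add, A.apply_symm_apply]

theorem ultrametric_inverse_function_theorem_exact_images_general {x₀ : E} {r : ℝ}
    {A : E ≃L[𝕜] F} {c : ℝ} (hc : c < ‖(A.symm : F →L[𝕜] E)‖⁻¹) {f : E → F}
    (hf : ∀ y ∈ ball x₀ r, ∀ z ∈ ball x₀ r, ‖f y - f z - A (y - z)‖ ≤ c * ‖y - z‖)
    {y : E} (hy : y ∈ ball x₀ r) {s : ℝ} (hsr : s ≤ r) :
    ball y s ⊆ ball x₀ r ∧ f '' ball y s = (fun w => f y + A w) '' ball (0 : E) s := by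
  have hsub : ball y s ⊆ ball x₀ r :=
    (ball_subset_ball hsr).trans_eq (IsUltrametricDist.ball_eq_of_mem hy).symm
  have happrox : ApproximatesLinearOn f (A : E →L[𝕜] F) (ball x₀ r) c.toNNReal :=
    fun u hu v hv => (hf u hu v hv).trans <| by gcongr; exact Real.le_coe_toNNReal c
  exact ⟨hsub, image_ball_of_approximatesLinearOn (mul_toNNReal_lt_one hc) (happrox.mono_set hsub)⟩

end ApproximatelyLinear

/-- **Ultrametric Inverse Function Theorem (exact images of balls).**  Let `𝕜` be an
ultrametric valued field and `F` an ultrametric Banach space over `𝕜`.  Let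
`x₀ ∈ F`, `r > 0`, `A ∈ GL(F)` a bicontinuous linear automorphism, and
`f : B_r(x₀) → F` with `‖f y − f z − A (y − z)‖ ≤ c·‖y − z‖` on `B_r(x₀)` for some
`c < ‖A⁻¹‖⁻¹`.  Then for every `y ∈ B_r(x₀)` and `0 < s ≤ r` one has
`B_s(y) ⊆ B_r(x₀)` and the exact image formula `f (B_s(y)) = f y + A (B_s(0))`. -/
theorem ultrametric_inverse_function_theorem_exact_images
    {𝕜 : Type*} [NontriviallyNormedField 𝕜] [IsUltrametricDist 𝕜]
    {F : Type*} [NormedAddCommGroup F] [NormedSpace 𝕜 F] [CompleteSpace F]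
    [IsUltrametricDist F]
    (x₀ : F) (r : ℝ) (hr : 0 < r)
    (A : F ≃L[𝕜] F) (c : ℝ) (hc : c < ‖(A.symm : F →L[𝕜] F)‖⁻¹)
    (f : F → F)
    (hf : ∀ y ∈ ball x₀ r, ∀ z ∈ ball x₀ r, ‖f y - f z - A (y - z)‖ ≤ c * ‖y - z‖) :
    ∀ y ∈ ball x₀ r, ∀ s : ℝ, 0 < s → s ≤ r →
      ball y s ⊆ ball x₀ r ∧
      f '' ball y s = (fun w => f y + A w) '' ball (0 : F) s := by
  exact fun y hy s _ hsr =>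
    ultrametric_inverse_function_theorem_exact_images_general hc hf hy hsr
end

section
/- Compatibility with Schikhof's ultrametric calculus: Let (𝕜,|·|) be a complete ultrametric valued field, U ⊆ 𝕜 open, and f : U → 𝕜 a map. Then f is C¹ in the extended-difference-quotient sense (f is continuous and there exists a continuous map f^{[1]} : U^{[1]} → 𝕜 with f^{[1]}(x,y,t) = t⁻¹·(f(x + t·y) − f(x)) for all (x,y,t) ∈ U^{[1]} with t ≠ 0) if and only if f is C¹ in Schikhof's sense, i.e. there exists a continuous map Φ : U × U → 𝕜 with Φ(x,y) = (f(x) − f(y))/(x − y) for all x, y ∈ U with x ≠ y. -/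
open Set Metric Filter Topology

/-!
The two difference quotients determine each other by the change of variables
`Φ (x, y) = f^{[1]} (y, 1, x - y)` and `f^{[1]} (x, y, t) = y • Φ (x + t y, x)`. The second formula
also covers `y = 0`, as `(x - y) • Φ (x, y) = f x - f y` holds on the diagonal as well; the same
identity makes `f` continuous.
-/

section

variable {𝕜 F : Type*} [Field 𝕜] [AddCommGroup F] [Module 𝕜 F]
  {U : Set 𝕜} {f : 𝕜 → F} {g : 𝕜 × 𝕜 × 𝕜 → F} {Φ : 𝕜 × 𝕜 → F}

/-- `Φ` extends Schikhof's difference quotient `Φ₁ f (x, y) = (f x - f y) / (x - y)` from the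
off-diagonal part of `U × U`; for vector-valued `f` the quotient is written with `slope`. -/
def IsSchikhofQuotOn (U : Set 𝕜) (f : 𝕜 → F) (Φ : 𝕜 × 𝕜 → F) : Prop :=
  ∀ x ∈ U, ∀ y ∈ U, x ≠ y → Φ (x, y) = slope f y x

/-- `f` is `C¹` on `U` in Schikhof's sense: its difference quotient extends continuously to
`U × U`. As with `IsC1On`, `f` and the extension are total functions restricted to these sets. -/
def IsSchikhofC1On [TopologicalSpace 𝕜] [TopologicalSpace F] (U : Set 𝕜) (f : 𝕜 → F) : Prop :=
  ∃ Φ : 𝕜 × 𝕜 → F, ContinuousOn Φ (U ×ˢ U) ∧ IsSchikhofQuotOn U f Φ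

theorem IsSchikhofQuotOn.sub_smul_eq_sub (h : IsSchikhofQuotOn U f Φ) {x y : 𝕜} (hx : x ∈ U)
    (hy : y ∈ U) : (x - y) • Φ (x, y) = f x - f y := by
  obtain rfl | hxy := eq_or_ne x y
  · simp
  · rw [h x hx y hy hxy, sub_smul_slope, vsub_eq_sub]

theorem IsDiffQuotOn.isSchikhofQuotOn (h : IsDiffQuotOn 𝕜 U f g) :
    IsSchikhofQuotOn U f fun p ↦ g (p.2, 1, p.1 - p.2) := by
  intro x hx y hy hxy
  have hmem : (y, 1, x - y) ∈ UOne 𝕜 U := ⟨hy, by simpa using hx⟩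
  simpa [slope] using h _ hmem (sub_ne_zero.mpr hxy)

theorem IsSchikhofQuotOn.isDiffQuotOn (h : IsSchikhofQuotOn U f Φ) :
    IsDiffQuotOn 𝕜 U f fun p ↦ p.2.1 • Φ (p.1 + p.2.2 • p.2.1, p.1) := by
  rintro ⟨x, y, t⟩ ⟨hx, hxty⟩ ht
  calc y • Φ (x + t • y, x)
      = t⁻¹ • (t • y) • Φ (x + t • y, x) := by rw [smul_assoc, inv_smul_smul₀ ht]
    _ = t⁻¹ • (x + t • y - x) • Φ (x + t • y, x) := by rw [add_sub_cancel_left]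
    _ = t⁻¹ • (f (x + t • y) - f x) := by rw [h.sub_smul_eq_sub hxty hx]

variable [TopologicalSpace 𝕜] [TopologicalSpace F]

theorem IsC1On.isSchikhofC1On [ContinuousSub 𝕜] (h : IsC1On 𝕜 U f) : IsSchikhofC1On U f := by
  obtain ⟨-, g, hg, hquot⟩ := h
  refine ⟨_, hg.comp (by fun_prop) ?_, hquot.isSchikhofQuotOn⟩
  rintro ⟨x, y⟩ ⟨hx, hy⟩
  exact ⟨hy, by simpa using hx⟩

theorem IsSchikhofC1On.continuousOn [ContinuousSub 𝕜] [ContinuousAdd F] [ContinuousSMul 𝕜 F]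
    (h : IsSchikhofC1On U f) : ContinuousOn f U := by
  obtain ⟨Φ, hΦ, hquot⟩ := h
  intro y hy
  have hΦy : ContinuousOn (fun x ↦ Φ (x, y)) U :=
    hΦ.comp (by fun_prop) fun _ hx ↦ ⟨hx, hy⟩
  have hcont : ContinuousOn (fun x ↦ (x - y) • Φ (x, y) + f y) U :=
    (ContinuousOn.smul (by fun_prop) hΦy).add continuousOn_const
  refine hcont.congr (fun x hx ↦ ?_) y hy
  exact sub_eq_iff_eq_add.mp (hquot.sub_smul_eq_sub hx hy).symm

theorem IsSchikhofC1On.isC1On [IsTopologicalRing 𝕜] [ContinuousAdd F] [ContinuousSMul 𝕜 F]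
    (h : IsSchikhofC1On U f) : IsC1On 𝕜 U f := by
  refine ⟨h.continuousOn, ?_⟩
  obtain ⟨Φ, hΦ, hquot⟩ := h
  have hcomp : ContinuousOn (fun p : 𝕜 × 𝕜 × 𝕜 ↦ Φ (p.1 + p.2.2 • p.2.1, p.1)) (UOne 𝕜 U) :=
    hΦ.comp (by fun_prop) fun _ hp ↦ ⟨hp.2, hp.1⟩
  exact ⟨_, .smul (by fun_prop) hcomp, hquot.isDiffQuotOn⟩

theorem diff_quotient_C1_iff_schikhof_C1_general [IsTopologicalRing 𝕜] [ContinuousAdd F]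
    [ContinuousSMul 𝕜 F] (U : Set 𝕜) (f : 𝕜 → F) : IsC1On 𝕜 U f ↔ IsSchikhofC1On U f :=
  ⟨IsC1On.isSchikhofC1On, IsSchikhofC1On.isC1On⟩

end

/-- **Compatibility with Schikhof's ultrametric calculus.**  Let `𝕜` be a complete
ultrametric valued field, `U ⊆ 𝕜` open, and `f : U → 𝕜`.  Then `f` is `C¹` in the
extended-difference-quotient sense if and only if `f` is `C¹` in Schikhof's sense,
i.e. there is a continuous map `Φ : U × U → 𝕜` with `Φ (x, y) = (f x − f y)/(x − y)`
for all `x ≠ y` in `U`. -/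
theorem diff_quotient_C1_iff_schikhof_C1
    {𝕜 : Type*} [NontriviallyNormedField 𝕜] [CompleteSpace 𝕜] [IsUltrametricDist 𝕜]
    {U : Set 𝕜} (hU : IsOpen U) (f : 𝕜 → 𝕜) :
    (ContinuousOn f U ∧
      ∃ g : 𝕜 × 𝕜 × 𝕜 → 𝕜, ContinuousOn g (UOne 𝕜 U) ∧ IsDiffQuotOn 𝕜 U f g) ↔
    (∃ Φ : 𝕜 × 𝕜 → 𝕜, ContinuousOn Φ (U ×ˢ U) ∧
      ∀ x ∈ U, ∀ y ∈ U, x ≠ y → Φ (x, y) = (f x - f y) / (x - y)) := by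
  simpa only [IsC1On, IsSchikhofC1On, IsSchikhofQuotOn, slope_def_field] using
    diff_quotient_C1_iff_schikhof_C1_general U f
end
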